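/- arXiv:2510.01466 — 3 statements merged into one kernel-verified Lean document; each statement's English description precedes it below -/
import Mathlib

section
/- Fix integers t ≥ 1 and Δ ≥ 3 and let r = 2·vol(Δ, 2t) where vol(Δ, t) = 1 + Δ·((Δ−1)^t − 1)/(Δ−2). Let G = (V,E) be a finite S_{t,t,t}-free simple graph of maximum degree at most Δ, let λ = (λ_v)_{v∈V} be complex weights such that Π_{v∈S} λ_v ∈ R(2^{Δr}) for every subset S ⊆ V with |S| ≤ r, let u ∈ V be a root vertex, and let (L,U) be an admissible pair with respect to (G,u). Then: (i) Z(U) ≠ 0 and Z(U ∖ ∂L) ≠ 0; and (ii) Z(U) / Z(U ∖ ∂L) ∈ H(1/2). In particular, taking the admissible pair (∅, V), Z_{G,λ} ≠ 0. -/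
attribute [local instance] Classical.propDecidable

/-- Multivariate independence polynomial of the induced subgraph `G[W]`:
the sum over all independent sets `S ⊆ W` of `∏ v ∈ S, lam v`. -/
noncomputable def indepPolyOn {V : Type*} [Fintype V] (G : SimpleGraph V)
    (lam : V → ℂ) (W : Finset V) : ℂ :=
  ∑ S ∈ W.powerset, if (∀ u ∈ S, ∀ v ∈ S, ¬ G.Adj u v) then ∏ v ∈ S, lam v else 0

/-- Multivariate independence polynomial `Z_{G,λ}`. -/
noncomputable def indepPoly {V : Type*} [Fintype V] (G : SimpleGraph V)
    (lam : V → ℂ) : ℂ :=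
  indepPolyOn G lam Finset.univ

/-- The subdivided claw `S_{t,t,t}`: three paths of length `t` sharing one common
endpoint (the vertex `none`). -/
def subdividedClaw (t : ℕ) : SimpleGraph (Option (Fin 3 × Fin t)) :=
  SimpleGraph.fromRel (fun a b =>
    match a, b with
    | none, some (_, j) => (j : ℕ) = 0
    | some (i, j), some (i', j') => i = i' ∧ (j : ℕ) + 1 = (j' : ℕ)
    | _, _ => False)

/-- The open parabolic region `R(k) = {z : (Im z)² < (1/k)·Re z + 1/(4k²)}`. -/
def parabR (k : ℝ) : Set ℂ := {z : ℂ | z.im ^ 2 < z.re / k + 1 / (4 * k ^ 2)}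

/-- The closed halfplane `H(t) = {z : Re z ≥ t}`. -/
def halfH (t : ℝ) : Set ℂ := {z : ℂ | t ≤ z.re}


/-- The boundary `∂X` of a set of vertices: the vertices outside `X` that have a
neighbour in `X`, with the special convention `∂∅ = {u}` for the root `u`. -/
noncomputable def bdry {V : Type*} [Fintype V] (G : SimpleGraph V) (u : V)
    (X : Finset V) : Finset V :=
  if X = ∅ then {u}
  else Finset.univ.filter (fun v => v ∉ X ∧ ∃ x ∈ X, G.Adj v x)

/-- Admissible pairs `(L, U)` with respect to a graph `G` and root vertex `u`. -/
inductive Admissible {V : Type*} [Fintype V] (G : SimpleGraph V) (u : V) :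
    Finset V → Finset V → Prop
  | base : Admissible G u ∅ Finset.univ
  | root : Admissible G u {u} (Finset.univ \ {u})
  | step (L' U' L : Finset V) :
      Admissible G u L' U' →
      L.Nonempty →
      L ⊆ bdry G u L' ∩ U' →
      (∀ a ∈ L, ∀ b ∈ L, ¬ G.Adj a b) →
      Admissible G u L (U' \ bdry G u L')

/-- `vol(Δ, t) = 1 + Δ·((Δ−1)^t − 1)/(Δ−2)`. -/
noncomputable def vol (Δ t : ℕ) : ℝ :=
  1 + (Δ : ℝ) * (((Δ : ℝ) - 1) ^ t - 1) / ((Δ : ℝ) - 2)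

/-!
Sorting the independent subsets of `U` by their trace `S` on a vertex set `D` gives
`Z(U) / Z(U ∖ D) = 1 + ∑ λ(S) · Z(U ∖ D ∖ N(S)) / Z(U ∖ D)`, the sum being over the nonempty
independent `S ⊆ U ∩ D`. Inductively each summand is `z / q` with `z = λ(S) ∈ R(k)` and
`Re q ≥ 1/2`. The latter means `|1/q - 1| ≤ 1`, so
`Re (z / q) = Re z + Re (z (1/q - 1)) ≥ Re z - |z| > -1/(2k)` because `R(k)` is the interior of a
parabola with focus `0`. As there are at most `2 ^ |D| ≤ k` summands, `Re (Z(U) / Z(U ∖ D)) ≥ 1/2`.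

For `D = ∂L` this needs a bound on `|L|`, uniform over the admissible pairs. If two balls of radius
`2t` cannot cover `L`, it has three vertices at pairwise distance greater than `2t`. Retracing the
exploration from these grows three paths, pairwise without edges between them, until some vertex
sees the ends of two of them. By then each path has length at least `t`, and the three are completed
to an induced `S_{t,t,t}`.
-/

/-! ### The parabolic region -/

/-- `R(k)` is the interior of the parabola with focus `0` and directrix `Re z = -1/(2k)`. -/
theorem mem_parabR_iff_norm_lt {k : ℝ} (hk : 0 < k) {z : ℂ} :
    z ∈ parabR k ↔ ‖z‖ < z.re + 1 / (2 * k) := by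
  have h_sq : (z.re + 1 / (2 * k)) ^ 2 - ‖z‖ ^ 2 = z.re / k + 1 / (4 * k ^ 2) - z.im ^ 2 := by
    rw [Complex.sq_norm, Complex.normSq_apply]
    field_simp
    ring
  have h_mem : z ∈ parabR k ↔ ‖z‖ ^ 2 < (z.re + 1 / (2 * k)) ^ 2 := by
    rw [parabR, Set.mem_ofPred_eq]
    constructor <;> intro h <;> linarith
  rw [h_mem, sq_lt_sq, abs_norm]
  refine ⟨fun h => ?_, fun h => h.trans_le (le_abs_self _)⟩
  rcases lt_abs.1 h with h | h
  · exact h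
  · have := neg_le_of_abs_le (Complex.abs_re_le_norm z)
    have : 0 < 1 / (2 * k) := by positivity
    linarith

theorem norm_inv_sub_one_le_one {q : ℂ} (hq : 1 / 2 ≤ q.re) : ‖q⁻¹ - 1‖ ≤ 1 := by
  have hq0 : q ≠ 0 := by rintro rfl; norm_num at hq
  have h_norm : ‖1 - q‖ ≤ ‖q‖ := by
    rw [← sq_le_sq₀ (norm_nonneg _) (norm_nonneg _), Complex.sq_norm, Complex.sq_norm,
      Complex.normSq_apply, Complex.normSq_apply, Complex.sub_re, Complex.sub_im, Complex.one_re,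
      Complex.one_im]
    linarith
  calc ‖q⁻¹ - 1‖ = ‖1 - q‖ / ‖q‖ := by rw [← norm_div, sub_div, one_div, div_self hq0]
    _ ≤ 1 := div_le_one_of_le₀ h_norm (norm_nonneg q)

theorem neg_lt_re_div_of_mem_parabR {k : ℝ} (hk : 0 < k) {z q : ℂ} (hz : z ∈ parabR k)
    (hq : 1 / 2 ≤ q.re) : -(1 / (2 * k)) < (z / q).re := by
  have h_re : |(z * (q⁻¹ - 1)).re| ≤ ‖z‖ := calc
    |(z * (q⁻¹ - 1)).re| ≤ ‖z * (q⁻¹ - 1)‖ := Complex.abs_re_le_norm _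
    _ = ‖z‖ * ‖q⁻¹ - 1‖ := norm_mul _ _
    _ ≤ ‖z‖ := mul_le_of_le_one_right (norm_nonneg z) (norm_inv_sub_one_le_one hq)
  have h_split : (z / q).re = z.re + (z * (q⁻¹ - 1)).re := by
    rw [← Complex.add_re]
    ring_nf
  have h_norm := (mem_parabR_iff_norm_lt hk).1 hz
  linarith [neg_le_of_abs_le h_re]

theorem neg_half_le_sum_of_card_le {ι : Type*} {s : Finset ι} {f : ι → ℝ} {k : ℝ} (hk : 0 < k)
    (hs : (s.card : ℝ) ≤ k) (hf : ∀ i ∈ s, -(1 / (2 * k)) ≤ f i) : -(1 / 2) ≤ ∑ i ∈ s, f i := calc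
  -(1 / 2) = k * -(1 / (2 * k)) := by field_simp
  _ ≤ s.card * -(1 / (2 * k)) := mul_le_mul_of_nonpos_right hs (neg_nonpos.2 (by positivity))
  _ ≤ ∑ i ∈ s, f i := by
    rw [← nsmul_eq_mul]
    exact Finset.card_nsmul_le_sum _ _ _ hf

/-! ### Expanding the independence polynomial -/

section IndepPoly

variable {V : Type*} {G : SimpleGraph V}

theorem isIndepSet_iff_forall_not_adj {s : Set V} :
    G.IsIndepSet s ↔ ∀ u ∈ s, ∀ v ∈ s, ¬ G.Adj u v :=
  ⟨fun h _ hu _ hv huv => h hu hv huv.ne huv, fun h _ hu _ hv _ => h _ hu _ hv⟩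

/-- The independent sets of `G` contained in `W`. -/
noncomputable def indepSubsets (G : SimpleGraph V) (W : Finset V) : Finset (Finset V) :=
  {S ∈ W.powerset | G.IsIndepSet (S : Set V)}

theorem mem_indepSubsets {S W : Finset V} :
    S ∈ indepSubsets G W ↔ S ⊆ W ∧ G.IsIndepSet (S : Set V) := by
  rw [indepSubsets, Finset.mem_filter, Finset.mem_powerset]

theorem card_indepSubsets_le (W : Finset V) : (indepSubsets G W).card ≤ 2 ^ W.card :=
  (Finset.card_filter_le _ _).trans_eq (Finset.card_powerset W)

variable [Fintype V]

/-- The open neighbourhood `N(X)` of a set of vertices, which may meet `X`. It replaces the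
boundary `∂X`: the two agree outside `X`, and `N(∅) = ∅`. -/
noncomputable def nbhd (G : SimpleGraph V) (X : Finset V) : Finset V :=
  X.biUnion fun x => G.neighborFinset x

theorem mem_nbhd {X : Finset V} {v : V} : v ∈ nbhd G X ↔ ∃ x ∈ X, G.Adj x v := by
  simp [nbhd]

theorem card_nbhd_le {d : ℕ} (hdeg : ∀ v, G.degree v ≤ d) (X : Finset V) :
    (nbhd G X).card ≤ X.card * d :=
  Finset.card_biUnion_le_card_mul _ _ _ fun v _ => hdeg v

theorem indepPolyOn_eq_sum_indepSubsets (lam : V → ℂ) (W : Finset V) :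
    indepPolyOn G lam W = ∑ S ∈ indepSubsets G W, ∏ v ∈ S, lam v := by
  rw [indepSubsets, Finset.sum_filter, indepPolyOn]
  simp only [isIndepSet_iff_forall_not_adj, SetLike.mem_coe]

theorem sum_indepSubsets_inter_eq (lam : V → ℂ) {U D S : Finset V}
    (hS : S ∈ indepSubsets G (U ∩ D)) :
    ∑ T ∈ indepSubsets G U with T ∩ D = S, ∏ v ∈ T, lam v =
      (∏ v ∈ S, lam v) * indepPolyOn G lam ((U \ D) \ nbhd G S) := by
  rw [indepPolyOn_eq_sum_indepSubsets, Finset.mul_sum]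
  refine Finset.sum_nbij' (· \ D) (S ∪ ·) ?_ ?_ ?_ ?_ ?_ <;>
    simp only [Finset.mem_filter, mem_indepSubsets, isIndepSet_iff_forall_not_adj,
      SetLike.mem_coe, Finset.subset_iff, Finset.mem_sdiff, Finset.mem_inter, Finset.mem_union,
      mem_nbhd] at hS ⊢
  · rintro T ⟨⟨hTU, hT_indep⟩, rfl⟩
    grind
  · rintro T ⟨hTU, hT_indep⟩
    grind [G.adj_comm]
  · rintro T ⟨-, rfl⟩
    grind
  · rintro T ⟨hTU, -⟩
    grind
  · rintro T ⟨-, rfl⟩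
    exact (Finset.prod_inter_mul_prod_sdiff T D lam).symm

theorem indepPolyOn_eq_sum_inter (lam : V → ℂ) (U D : Finset V) :
    indepPolyOn G lam U =
      ∑ S ∈ indepSubsets G (U ∩ D),
        (∏ v ∈ S, lam v) * indepPolyOn G lam ((U \ D) \ nbhd G S) := by
  have h_maps : ∀ T ∈ indepSubsets G U, T ∩ D ∈ indepSubsets G (U ∩ D) := by
    intro T hT
    rw [mem_indepSubsets] at hT ⊢
    exact ⟨Finset.inter_subset_inter_right hT.1,
      hT.2.mono (Finset.coe_subset.2 Finset.inter_subset_left)⟩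
  rw [indepPolyOn_eq_sum_indepSubsets, ← Finset.sum_fiberwise_of_maps_to h_maps]
  exact Finset.sum_congr rfl fun S hS => sum_indepSubsets_inter_eq lam hS

theorem half_le_re_indepPolyOn_div {lam : V → ℂ} {U D : Finset V} {k : ℝ}
    (hk : (2 : ℝ) ^ D.card ≤ k) (hZ : indepPolyOn G lam (U \ D) ≠ 0)
    (hS : ∀ S ⊆ U ∩ D, S.Nonempty → G.IsIndepSet (S : Set V) →
      ∏ v ∈ S, lam v ∈ parabR k ∧
      1 / 2 ≤ (indepPolyOn G lam (U \ D) / indepPolyOn G lam ((U \ D) \ nbhd G S)).re) :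
    1 / 2 ≤ (indepPolyOn G lam U / indepPolyOn G lam (U \ D)).re := by
  have hk0 : 0 < k := lt_of_lt_of_le (by positivity) hk
  set 𝓘 := indepSubsets G (U ∩ D)
  set term : Finset V → ℂ := fun S =>
    (∏ v ∈ S, lam v) * indepPolyOn G lam ((U \ D) \ nbhd G S) / indepPolyOn G lam (U \ D)
  have h_empty_mem : ∅ ∈ 𝓘 := by simp [𝓘, mem_indepSubsets]
  have h_empty : (term ∅).re = 1 := by simp [term, nbhd, hZ]
  have h_term : ∀ S ∈ 𝓘.erase ∅, -(1 / (2 * k)) ≤ (term S).re := by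
    intro S hSmem
    rw [Finset.mem_erase, mem_indepSubsets] at hSmem
    obtain ⟨h_weight, h_ratio⟩ :=
      hS S hSmem.2.1 (Finset.nonempty_iff_ne_empty.2 hSmem.1) hSmem.2.2
    simpa only [term, div_div_eq_mul_div] using
      (neg_lt_re_div_of_mem_parabR hk0 h_weight h_ratio).le
  have h_card : ((𝓘.erase ∅).card : ℝ) ≤ k := by
    refine le_trans ?_ hk
    exact_mod_cast calc
      (𝓘.erase ∅).card ≤ 𝓘.card := Finset.card_erase_le
      _ ≤ 2 ^ (U ∩ D).card := card_indepSubsets_le _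
      _ ≤ 2 ^ D.card :=
        Nat.pow_le_pow_right two_pos (Finset.card_le_card Finset.inter_subset_right)
  have h_sum : -(1 / 2) ≤ ∑ S ∈ 𝓘.erase ∅, (term S).re :=
    neg_half_le_sum_of_card_le hk0 h_card h_term
  rw [indepPolyOn_eq_sum_inter lam U D, Finset.sum_div, Complex.re_sum,
    ← Finset.add_sum_erase 𝓘 _ h_empty_mem]
  change 1 / 2 ≤ (term ∅).re + ∑ S ∈ 𝓘.erase ∅, (term S).re
  linarith

end IndepPoly

/-! ### Frontiers and the zero-freeness recursion -/

section Frontier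

variable {V : Type*} [Fintype V] {G : SimpleGraph V}

/-- Admissible pairs with nonempty first entry, where the exploration may start from a single
vertex against an arbitrary vertex set `U` instead of the whole graph. This is the form that
survives the induction over `U`, since `Z(U)` can then be expanded at any vertex of `U`. -/
inductive Frontier (G : SimpleGraph V) : Finset V → Finset V → Prop
  | root (u : V) (U : Finset V) (hu : u ∉ U) : Frontier G {u} U
  | step (L U S : Finset V) (h : Frontier G L U) (hne : S.Nonempty) (hsub : S ⊆ U ∩ nbhd G L)
      (hindep : G.IsIndepSet (S : Set V)) : Frontier G S (U \ nbhd G L)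

/-- A set `D` of vertices whose removal from `U` leaves every nonempty independent `S ⊆ U ∩ D`
as a frontier; these are the sets along which `Z(U)` is expanded. -/
def IsPeel (G : SimpleGraph V) (U D : Finset V) : Prop :=
  ∀ S ⊆ U ∩ D, S.Nonempty → G.IsIndepSet (S : Set V) → Frontier G S (U \ D)

theorem isPeel_singleton (U : Finset V) (u : V) : IsPeel G U {u} := by
  intro S hS hne _
  obtain rfl : S = {u} :=
    hne.subset_singleton_iff.1 (hS.trans Finset.inter_subset_right)
  exact .root u _ (by simp)

theorem Frontier.isPeel_nbhd {L U : Finset V} (h : Frontier G L U) : IsPeel G U (nbhd G L) :=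
  fun S hS hne hindep => .step L U S h hne hS hindep

theorem indepPolyOn_ne_zero_and_half_le_re_div {lam : V → ℂ} {N : ℕ} (hN : 1 ≤ N)
    (hnbhd : ∀ L U, Frontier G L U → (nbhd G L).card ≤ N)
    (hlam : ∀ L U, Frontier G L U → ∏ v ∈ L, lam v ∈ parabR (2 ^ N)) (U : Finset V) :
    indepPolyOn G lam U ≠ 0 ∧ ∀ D, D.card ≤ N → IsPeel G U D →
      1 / 2 ≤ (indepPolyOn G lam U / indepPolyOn G lam (U \ D)).re := by
  induction U using Finset.strongInduction with
  | H U ih =>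
    have ratio_of_ssubset : ∀ D, U \ D ⊂ U → D.card ≤ N → IsPeel G U D →
        1 / 2 ≤ (indepPolyOn G lam U / indepPolyOn G lam (U \ D)).re := by
      intro D hD hDN hpeel
      obtain ⟨hZ, h_ratio⟩ := ih _ hD
      refine half_le_re_indepPolyOn_div (pow_le_pow_right₀ one_le_two hDN) hZ
        fun S hS hne hindep => ?_
      have hF := hpeel S hS hne hindep
      exact ⟨hlam _ _ hF, h_ratio _ (hnbhd _ _ hF) hF.isPeel_nbhd⟩
    have hZ : indepPolyOn G lam U ≠ 0 := by
      rcases U.eq_empty_or_nonempty with rfl | ⟨u, hu⟩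
      · simp [indepPolyOn]
      · intro h0
        have := ratio_of_ssubset {u}
          (Finset.sdiff_ssubset (Finset.singleton_subset_iff.2 hu) (Finset.singleton_nonempty u))
          (by simpa using hN) (isPeel_singleton U u)
        norm_num [h0] at this
    refine ⟨hZ, fun D hDN hpeel => ?_⟩
    rcases (Finset.sdiff_subset : U \ D ⊆ U).eq_or_ssubset with hD | hD
    · norm_num [hD, hZ]
    · exact ratio_of_ssubset D hD hDN hpeel

theorem Frontier.isIndepSet {L U : Finset V} (h : Frontier G L U) :
    G.IsIndepSet (L : Set V) := by
  cases h with
  | root u U hu => simp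
  | step L' U' L h' hne hsub hindep => exact hindep

theorem Frontier.disjoint {L U : Finset V} (h : Frontier G L U) : Disjoint L U := by
  cases h with
  | root u U hu => exact Finset.disjoint_singleton_left.2 hu
  | step L' U' L h' hne hsub hindep =>
    exact Finset.disjoint_sdiff.mono_left (hsub.trans Finset.inter_subset_right)

theorem Frontier.compl_adj_of_ne {L U : Finset V} (h : Frontier G L U) {p q : V} (hp : p ∈ L)
    (hq : q ∈ L) (hpq : p ≠ q) : Gᶜ.Adj p q :=
  (G.compl_adj p q).2 ⟨hpq, h.isIndepSet hp hq hpq⟩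

theorem Frontier.compl_adj {L U : Finset V} (h : Frontier G L U) {m x : V} (hm : m ∈ L)
    (hx : x ∈ U) (hmx : ¬ G.Adj m x) : Gᶜ.Adj m x :=
  (G.compl_adj m x).2 ⟨Finset.disjoint_iff_ne.1 h.disjoint m hm x hx, hmx⟩

theorem Frontier.compl_adj_of_mem_sdiff {L U : Finset V} (h : Frontier G L U) {m x : V}
    (hm : m ∈ L) (hx : x ∈ U \ nbhd G L) : Gᶜ.Adj m x := by
  rw [Finset.mem_sdiff, mem_nbhd] at hx
  exact h.compl_adj hm hx.1 fun hmx => hx.2 ⟨m, hm, hmx⟩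

end Frontier

/-! ### Induced paths -/

section InducedPath

variable {V : Type*} {G : SimpleGraph V}

/-- The vertex sets `A` and `B`, given as lists, are disjoint with no edge between them. -/
def Anticomplete (G : SimpleGraph V) (A B : List V) : Prop :=
  ∀ a ∈ A, ∀ b ∈ B, Gᶜ.Adj a b

theorem Anticomplete.symm {A B : List V} (h : Anticomplete G A B) : Anticomplete G B A :=
  fun b hb a ha => (h a ha b hb).symm

theorem anticomplete_cons_left {x : V} {A B : List V} :
    Anticomplete G (x :: A) B ↔ (∀ b ∈ B, Gᶜ.Adj x b) ∧ Anticomplete G A B :=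
  List.forall_mem_cons

theorem anticomplete_cons_right {x : V} {A B : List V} :
    Anticomplete G A (x :: B) ↔ (∀ a ∈ A, Gᶜ.Adj a x) ∧ Anticomplete G A B := by
  simp only [Anticomplete, List.forall_mem_cons, forall_and]

/-- The list enumerates the vertices of an induced path of `G` in order. -/
def IsInducedPath (G : SimpleGraph V) : List V → Prop
  | [] => True
  | [_] => True
  | x :: y :: l => G.Adj x y ∧ (∀ z ∈ l, Gᶜ.Adj x z) ∧ IsInducedPath G (y :: l)

theorem IsInducedPath.append {P l : List V} {q : V} (hP : IsInducedPath G (P ++ [q]))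
    (hl : IsInducedPath G (q :: l)) (h : Anticomplete G P l) :
    IsInducedPath G (P ++ q :: l) := by
  induction P with
  | nil => exact hl
  | cons x P ih =>
    rw [anticomplete_cons_left] at h
    cases P with
    | nil => exact ⟨hP.1, h.1, hl⟩
    | cons y P =>
      obtain ⟨hxy, hx, hP'⟩ := hP
      refine ⟨hxy, fun z hz => ?_, ih hP' h.2⟩
      rcases List.mem_append.1 hz with hzP | hzl
      · exact hx z (List.mem_append_left _ hzP)
      · rcases List.mem_cons.1 hzl with rfl | hzl
        · exact hx z (List.mem_append_right _ (List.mem_singleton_self z))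
        · exact h.1 z hzl

theorem IsInducedPath.ne_and_adj_iff {l : List V} (h : IsInducedPath G l) {i j : ℕ}
    (hij : i < j) (hj : j < l.length) :
    l[i] ≠ l[j] ∧ (G.Adj l[i] l[j] ↔ j = i + 1) := by
  induction l generalizing i j with
  | nil => simp at hj
  | cons x l ih =>
    cases l with
    | nil => simp at hj; omega
    | cons y l =>
      obtain ⟨hxy, hx, h'⟩ := h
      rcases i with _ | i <;> rcases j with _ | j
      · omega
      · rcases j with _ | j
        · simp [hxy, hxy.ne]
        · have := (G.compl_adj _ _).1 (hx _ (List.getElem_mem (n := j) (by simpa using hj)))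
          simpa using this
      · omega
      · simpa using ih h' (Nat.lt_of_succ_lt_succ hij) (Nat.lt_of_succ_lt_succ hj)

variable [Fintype V]

theorem Frontier.exists_isInducedPath {L U : Finset V} (h : Frontier G L U) {p q : V}
    (hp : p ∈ L) (hq : q ∈ L) (hpq : p ≠ q) :
    ∃ l : List V, (∀ x ∈ l, ∀ y ∈ U, Gᶜ.Adj x y) ∧ IsInducedPath G (p :: l ++ [q]) := by
  induction h generalizing p q with
  | root u U _ => simp_all
  | step L U S h hne hsub hindep ih =>
    have hpU := (Finset.mem_inter.1 (hsub hp)).1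
    have hqU := (Finset.mem_inter.1 (hsub hq)).1
    obtain ⟨p', hp', hp'p⟩ := mem_nbhd.1 (Finset.mem_inter.1 (hsub hp)).2
    obtain ⟨q', hq', hq'q⟩ := mem_nbhd.1 (Finset.mem_inter.1 (hsub hq)).2
    have hpq_compl : Gᶜ.Adj p q := (h.step L U S hne hsub hindep).compl_adj_of_ne hp hq hpq
    have h_far : ∀ m ∈ L, ∀ y ∈ U \ nbhd G L, Gᶜ.Adj m y :=
      fun m hm y hy => h.compl_adj_of_mem_sdiff hm hy
    by_cases hcommon : ∃ m ∈ L, G.Adj m p ∧ G.Adj m q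
    · obtain ⟨m, hm, hmp, hmq⟩ := hcommon
      exact ⟨[m], by simpa using h_far m hm, hmp.symm, by simpa using hpq_compl, hmq, by simp,
        trivial⟩
    · push Not at hcommon
      have hp'q : Gᶜ.Adj p' q := h.compl_adj hp' hqU (hcommon p' hp' hp'p)
      have hpq' : Gᶜ.Adj p q' := (h.compl_adj hq' hpU fun hq'p => hcommon q' hq' hq'p hq'q).symm
      have hp'q' : p' ≠ q' := by rintro rfl; exact hcommon p' hp' hp'p hq'q
      obtain ⟨l, hlU, hl⟩ := ih hp' hq' hp'q'
      refine ⟨p' :: l ++ [q'], ?_, ?_⟩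
      · simp only [List.forall_mem_append, List.forall_mem_cons]
        exact ⟨⟨h_far p' hp', fun x hx y hy => hlU x hx y (Finset.mem_sdiff.1 hy).1⟩,
          h_far q' hq', by simp⟩
      · have h_init : IsInducedPath G (p :: p' :: l ++ [q']) := by
          refine ⟨hp'p.symm, ?_, hl⟩
          exact List.forall_mem_append.2 ⟨fun z hz => (hlU z hz p hpU).symm, by simpa using hpq'⟩
        have h_last : Anticomplete G (p :: p' :: l) [q] := by
          simp only [anticomplete_cons_left, List.forall_mem_singleton]
          exact ⟨hpq_compl, hp'q, fun x hx => by simpa using hlU x hx q hqU⟩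
        have hq'q_path : IsInducedPath G [q', q] := ⟨hq'q, by simp, trivial⟩
        simpa using h_init.append hq'q_path h_last

end InducedPath

/-! ### Finding a subdivided claw -/

section Claw

variable {V : Type*} {G : SimpleGraph V} {t : ℕ}

theorem subdividedClaw_adj_none_some {i : Fin 3} {j : Fin t} :
    (subdividedClaw t).Adj none (some (i, j)) ↔ (j : ℕ) = 0 := by
  simp [subdividedClaw]

theorem subdividedClaw_adj_some_some {i i' : Fin 3} {j j' : Fin t} :
    (subdividedClaw t).Adj (some (i, j)) (some (i', j')) ↔
      i = i' ∧ ((j : ℕ) + 1 = j' ∨ (j' : ℕ) + 1 = j) := by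
  simp only [subdividedClaw, SimpleGraph.fromRel_adj, ne_eq, Option.some.injEq, Prod.mk.injEq,
    Fin.ext_iff]
  omega

theorem isIndContained_of_forall_ne {W : Type*} {H : SimpleGraph W} (f : W → V)
    (hf : ∀ x y, x ≠ y → f x ≠ f y ∧ (G.Adj (f x) (f y) ↔ H.Adj x y)) : H.IsIndContained G := by
  refine ⟨⟨⟨f, fun x y hxy => by_contra fun hne => (hf x y hne).1 hxy⟩, fun {x y} => ?_⟩⟩
  by_cases hxy : x = y
  · simp [hxy]
  · exact (hf x y hxy).2

theorem subdividedClaw_isIndContained_of_arms (v : V) (l : Fin 3 → List V)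
    (hlen : ∀ i, t ≤ (l i).length) (hpath : ∀ i, IsInducedPath G (v :: l i))
    (hanti : Pairwise fun i j => Anticomplete G (l i) (l j)) :
    (subdividedClaw t).IsIndContained G := by
  have hlt : ∀ (i : Fin 3) (j : Fin t), (j : ℕ) < (l i).length := fun i j => j.2.trans_le (hlen i)
  let f : Option (Fin 3 × Fin t) → V
    | none => v
    | some (i, j) => (l i)[(j : ℕ)]'(hlt i j)
  have h_center : ∀ (i : Fin 3) (j : Fin t), v ≠ f (some (i, j)) ∧
      (G.Adj v (f (some (i, j))) ↔ (j : ℕ) = 0) := fun i j => by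
    simpa [f] using (hpath i).ne_and_adj_iff (Nat.succ_pos j) (Nat.succ_lt_succ (hlt i j))
  have h_arm : ∀ (i : Fin 3) (j j' : Fin t), j < j' → f (some (i, j)) ≠ f (some (i, j')) ∧
      (G.Adj (f (some (i, j))) (f (some (i, j'))) ↔ (j' : ℕ) = j + 1) := fun i j j' hjj' => by
    simpa [f] using
      (hpath i).ne_and_adj_iff (Nat.succ_lt_succ hjj') (Nat.succ_lt_succ (hlt i j'))
  have h_arms : ∀ (i i' : Fin 3) (j j' : Fin t), i ≠ i' → f (some (i, j)) ≠ f (some (i', j')) ∧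
      ¬ G.Adj (f (some (i, j))) (f (some (i', j'))) := fun i i' j j' hii' =>
    (G.compl_adj _ _).1 (hanti hii' _ (List.getElem_mem _) _ (List.getElem_mem _))
  refine isIndContained_of_forall_ne f ?_
  rintro (_ | ⟨i, j⟩) (_ | ⟨i', j'⟩) hne
  · exact absurd rfl hne
  · rw [subdividedClaw_adj_none_some]
    exact h_center i' j'
  · rw [SimpleGraph.adj_comm, SimpleGraph.adj_comm _ _ none, subdividedClaw_adj_none_some]
    exact ⟨(h_center i j).1.symm, (h_center i j).2⟩
  · rw [subdividedClaw_adj_some_some]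
    rcases eq_or_ne i i' with rfl | hii'
    · rcases lt_trichotomy j j' with hlt | rfl | hgt
      · exact ⟨(h_arm i j j' hlt).1, by grind⟩
      · exact absurd rfl hne
      · exact ⟨(h_arm i j' j hgt).1.symm, by grind [G.adj_comm]⟩
    · exact ⟨(h_arms i i' j j' hii').1, by simp [h_arms i i' j j' hii', hii']⟩

theorem subdividedClaw_isIndContained_of_three_arms {v : V} {A B C : List V}
    (hA : t ≤ A.length) (hB : t ≤ B.length) (hC : t ≤ C.length)
    (hvA : IsInducedPath G (v :: A)) (hvB : IsInducedPath G (v :: B))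
    (hvC : IsInducedPath G (v :: C)) (hAB : Anticomplete G A B) (hAC : Anticomplete G A C)
    (hBC : Anticomplete G B C) : (subdividedClaw t).IsIndContained G := by
  refine subdividedClaw_isIndContained_of_arms v ![A, B, C] ?_ ?_ ?_
  · simp [Fin.forall_fin_succ, hA, hB, hC]
  · simp [Fin.forall_fin_succ, hvA, hvB, hvC]
  · simp [Pairwise, Fin.forall_fin_succ, hAB, hAC, hBC, hAB.symm, hAC.symm, hBC.symm]

/-- Three pairwise anticomplete induced paths `a i :: A i`, each with `n` edges, whose feet `a i`
lie in `W` and whose remaining vertices lie in `U`. -/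
structure Tripod (G : SimpleGraph V) (W U : Finset V) (n : ℕ) (a : Fin 3 → V)
    (A : Fin 3 → List V) : Prop where
  foot_mem : ∀ i, a i ∈ W
  tail_mem : ∀ i, ∀ x ∈ A i, x ∈ U
  length_eq : ∀ i, (A i).length = n
  isInducedPath : ∀ i, IsInducedPath G (a i :: A i)
  anticomplete : Pairwise fun i j => Anticomplete G (a i :: A i) (a j :: A j)

namespace Tripod

variable [Fintype V] {L U : Finset V} {n : ℕ} {a : Fin 3 → V} {A : Fin 3 → List V}
  {m q : V} {i j k : Fin 3}

theorem mem_of_mem_path (T : Tripod G U (U \ nbhd G L) n a A) (i : Fin 3) :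
    ∀ x ∈ a i :: A i, x ∈ U :=
  List.forall_mem_cons.2 ⟨T.foot_mem i, fun x hx => Finset.sdiff_subset (T.tail_mem i x hx)⟩

theorem compl_adj_tail (T : Tripod G U (U \ nbhd G L) n a A) (h : Frontier G L U) (hm : m ∈ L)
    (i : Fin 3) : ∀ x ∈ A i, Gᶜ.Adj m x :=
  fun x hx => h.compl_adj_of_mem_sdiff hm (T.tail_mem i x hx)

theorem compl_adj_path (T : Tripod G U (U \ nbhd G L) n a A) (h : Frontier G L U) (hm : m ∈ L)
    (hma : ¬ G.Adj m (a i)) : ∀ x ∈ a i :: A i, Gᶜ.Adj m x :=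
  List.forall_mem_cons.2 ⟨h.compl_adj hm (T.foot_mem i) hma, T.compl_adj_tail h hm i⟩

theorem isInducedPath_cons (T : Tripod G U (U \ nbhd G L) n a A) (h : Frontier G L U)
    (hm : m ∈ L) (hma : G.Adj m (a i)) : IsInducedPath G (m :: a i :: A i) :=
  ⟨hma, T.compl_adj_tail h hm i, T.isInducedPath i⟩

theorem extend (T : Tripod G U (U \ nbhd G L) n a A) (h : Frontier G L U) {p : Fin 3 → V}
    (hp : ∀ i, p i ∈ L) (hpa : ∀ i, G.Adj (p i) (a i))
    (hcommon : ∀ m ∈ L, ∀ i j, i ≠ j → G.Adj m (a i) → ¬ G.Adj m (a j)) :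
    Tripod G L U (n + 1) p fun i => a i :: A i where
  foot_mem := hp
  tail_mem := T.mem_of_mem_path
  length_eq i := by rw [List.length_cons, T.length_eq i]
  isInducedPath i := T.isInducedPath_cons h (hp i) (hpa i)
  anticomplete i j hij := by
    have h_far : ∀ {i j}, i ≠ j → ∀ x ∈ a j :: A j, Gᶜ.Adj (p i) x := fun {i j} hij =>
      T.compl_adj_path h (hp i) (hcommon _ (hp i) i j hij (hpa i))
    have h_feet : Gᶜ.Adj (p i) (p j) := by
      refine h.compl_adj_of_ne (hp i) (hp j) fun hpij => ?_
      exact hcommon _ (hp i) i j hij (hpa i) (hpij ▸ hpa j)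
    exact anticomplete_cons_left.2 ⟨List.forall_mem_cons.2 ⟨h_feet, h_far hij⟩,
      anticomplete_cons_right.2 ⟨fun x hx => (h_far hij.symm x hx).symm, T.anticomplete hij⟩⟩

theorem isIndContained_of_adj_feet (T : Tripod G U (U \ nbhd G L) n a A) (h : Frontier G L U)
    (htn : t ≤ n) (hm : m ∈ L) (hma : ∀ i, G.Adj m (a i)) :
    (subdividedClaw t).IsIndContained G := by
  refine subdividedClaw_isIndContained_of_arms m (fun i => a i :: A i) (fun i => ?_)
    (fun i => T.isInducedPath_cons h hm (hma i)) T.anticomplete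
  rw [List.length_cons, T.length_eq i]
  omega

/-- Here the foot `a i` is the centre of the claw. -/
theorem isIndContained_of_two_adj_foot (T : Tripod G U (U \ nbhd G L) n a A)
    (h : Frontier G L U) (htn : t ≤ n) (hij : i ≠ j) (hik : i ≠ k) (hjk : j ≠ k)
    (hm : m ∈ L) (hq : q ∈ L) (hmi : G.Adj m (a i)) (hmj : G.Adj m (a j))
    (hmk : ¬ G.Adj m (a k)) (hqi : G.Adj q (a i)) (hqj : ¬ G.Adj q (a j))
    (hqk : G.Adj q (a k)) : (subdividedClaw t).IsIndContained G := by
  have h_arm : ∀ {j x}, i ≠ j → x ∈ L → G.Adj x (a i) → G.Adj x (a j) →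
      IsInducedPath G (a i :: x :: a j :: A j) ∧ Anticomplete G (A i) (x :: a j :: A j) := by
    intro j x hij hx hxi hxj
    have hanti := anticomplete_cons_left.1 (T.anticomplete hij)
    exact ⟨⟨hxi.symm, hanti.1, T.isInducedPath_cons h hx hxj⟩,
      anticomplete_cons_right.2 ⟨fun y hy => (T.compl_adj_tail h hx i y hy).symm, hanti.2⟩⟩
  have hmq : Gᶜ.Adj m q := h.compl_adj_of_ne hm hq (by rintro rfl; exact hqj hmj)
  have h_arms : Anticomplete G (m :: a j :: A j) (q :: a k :: A k) :=
    anticomplete_cons_left.2 ⟨List.forall_mem_cons.2 ⟨hmq, T.compl_adj_path h hm hmk⟩,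
      anticomplete_cons_right.2
        ⟨fun x hx => (T.compl_adj_path h hq hqj x hx).symm, T.anticomplete hjk⟩⟩
  have hlen := T.length_eq
  exact subdividedClaw_isIndContained_of_three_arms (by grind) (by grind) (by grind)
    (T.isInducedPath i) (h_arm hij hm hmi hmj).1 (h_arm hik hq hqi hqk).1 (h_arm hij hm hmi hmj).2
    (h_arm hik hq hqi hqk).2 h_arms

/-- Here `m` is the centre of the claw, and the third arm runs through the explored region. -/
theorem isIndContained_of_adj_two_feet (T : Tripod G U (U \ nbhd G L) n a A)
    (h : Frontier G L U) (htn : t ≤ n) (hij : i ≠ j) (hik : i ≠ k) (hjk : j ≠ k)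
    (hm : m ∈ L) (hq : q ∈ L) (hmi : G.Adj m (a i)) (hmj : G.Adj m (a j))
    (hmk : ¬ G.Adj m (a k)) (hqi : ¬ G.Adj q (a i)) (hqj : ¬ G.Adj q (a j))
    (hqk : G.Adj q (a k)) : (subdividedClaw t).IsIndContained G := by
  have hmq : m ≠ q := by rintro rfl; exact hqi hmi
  obtain ⟨l, hlU, hl⟩ := h.exists_isInducedPath hm hq hmq
  have h_long : IsInducedPath G (m :: (l ++ q :: a k :: A k)) :=
    hl.append (T.isInducedPath_cons h hq hqk)
      (anticomplete_cons_left.2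
        ⟨T.compl_adj_path h hm hmk, fun x hx y hy => hlU x hx y (T.mem_of_mem_path k y hy)⟩)
  have h_arms : ∀ {i}, i ≠ k → ¬ G.Adj q (a i) →
      Anticomplete G (a i :: A i) (l ++ q :: a k :: A k) := by
    intro i hik hqi x hx
    refine List.forall_mem_append.2 ⟨fun y hy => (hlU y hy x (T.mem_of_mem_path i x hx)).symm, ?_⟩
    exact List.forall_mem_cons.2
      ⟨(T.compl_adj_path h hq hqi x hx).symm, T.anticomplete hik x hx⟩
  have hlen := T.length_eq
  exact subdividedClaw_isIndContained_of_three_arms (by grind) (by grind) (by grind)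
    (T.isInducedPath_cons h hm hmi) (T.isInducedPath_cons h hm hmj) h_long (T.anticomplete hij)
    (h_arms hik hqi) (h_arms hjk hqj)

theorem isIndContained_of_common_adj (T : Tripod G U (U \ nbhd G L) n a A)
    (h : Frontier G L U) (htn : t ≤ n) (hfeet : ∀ i, a i ∈ nbhd G L) (hm : m ∈ L) (hij : i ≠ j)
    (hmi : G.Adj m (a i)) (hmj : G.Adj m (a j)) : (subdividedClaw t).IsIndContained G := by
  obtain ⟨k, hki, hkj⟩ := Fin.exists_ne_and_ne_of_two_lt i j (by norm_num)
  obtain ⟨q, hq, hqk⟩ := mem_nbhd.1 (hfeet k)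
  have h_cover : ∀ x, x = i ∨ x = j ∨ x = k := by omega
  by_cases hmk : G.Adj m (a k)
  · refine T.isIndContained_of_adj_feet h htn hm fun x => ?_
    rcases h_cover x with rfl | rfl | rfl <;> assumption
  by_cases hqi : G.Adj q (a i) <;> by_cases hqj : G.Adj q (a j)
  · refine T.isIndContained_of_adj_feet h htn hq fun x => ?_
    rcases h_cover x with rfl | rfl | rfl <;> assumption
  · exact T.isIndContained_of_two_adj_foot h htn hij hki.symm hkj.symm hm hq hmi hmj hmk hqi hqj hqk
  · exact T.isIndContained_of_two_adj_foot h htn hij.symm hkj.symm hki.symm hm hq hmj hmi hmk hqj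
      hqi hqk
  · exact T.isIndContained_of_adj_two_feet h htn hij hki.symm hkj.symm hm hq hmi hmj hmk hqi hqj hqk

end Tripod

theorem edist_le_succ_of_adj {x y z : V} {n : ℕ} (h : G.edist x y ≤ n) (hyz : G.Adj y z) :
    G.edist x z ≤ (n + 1 : ℕ) := calc
  G.edist x z ≤ G.edist x y + G.edist y z := SimpleGraph.edist_triangle
  _ ≤ n + 1 := add_le_add h (SimpleGraph.edist_eq_one_iff_adj.2 hyz).le
  _ = (n + 1 : ℕ) := (Nat.cast_succ n).symm

/-- Retracing the exploration, a tripod on the frontier grows along predecessors until two of its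
feet share one; the roots `r` remember where the feet started, so that by then the arms are long. -/
theorem Frontier.isIndContained_of_tripod [Fintype V] {L U : Finset V} (h : Frontier G L U) {n : ℕ}
    {r a : Fin 3 → V} {A : Fin 3 → List V}
    (hr : Pairwise fun i j => ((2 * t : ℕ) : ℕ∞) < G.edist (r i) (r j))
    (hra : ∀ i, G.edist (r i) (a i) ≤ n) (T : Tripod G L U n a A) :
    (subdividedClaw t).IsIndContained G := by
  induction h generalizing n a A with
  | root u U _ =>
    have h_feet : ∀ i, a i = u := fun i => Finset.mem_singleton.1 (T.foot_mem i)
    have := T.anticomplete zero_ne_one (a 0) (by simp) (a 1) (by simp)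
    simp [h_feet] at this
  | step L U S h _ hsub _ ih =>
    have T' : Tripod G U (U \ nbhd G L) n a A :=
      { T with foot_mem := fun i => (Finset.mem_inter.1 (hsub (T.foot_mem i))).1 }
    have hfeet : ∀ i, a i ∈ nbhd G L := fun i => (Finset.mem_inter.1 (hsub (T.foot_mem i))).2
    by_cases hcommon : ∃ m ∈ L, ∃ i j, i ≠ j ∧ G.Adj m (a i) ∧ G.Adj m (a j)
    · obtain ⟨m, hm, i, j, hij, hmi, hmj⟩ := hcommon
      have htn : t ≤ n := by
        have h_dist : ((2 * t : ℕ) : ℕ∞) < ((n + 1 + (n + 1) : ℕ) : ℕ∞) := calc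
          ((2 * t : ℕ) : ℕ∞) < G.edist (r i) (r j) := hr hij
          _ ≤ G.edist (r i) m + G.edist m (r j) := SimpleGraph.edist_triangle
          _ ≤ ((n + 1 : ℕ) : ℕ∞) + ((n + 1 : ℕ) : ℕ∞) :=
            add_le_add (edist_le_succ_of_adj (hra i) hmi.symm)
              (SimpleGraph.edist_comm.trans_le (edist_le_succ_of_adj (hra j) hmj.symm))
          _ = ((n + 1 + (n + 1) : ℕ) : ℕ∞) := (Nat.cast_add _ _).symm
        have := Nat.cast_lt.1 h_dist
        omega
      exact T'.isIndContained_of_common_adj h htn hfeet hm hij hmi hmj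
    · push Not at hcommon
      choose p hp hpa using fun i => mem_nbhd.1 (hfeet i)
      exact ih (fun i => edist_le_succ_of_adj (hra i) (hpa i).symm) (T'.extend h hp hpa hcommon)

end Claw

/-! ### Growth of balls -/

section Ball

variable {V : Type*} [Fintype V] {G : SimpleGraph V} {d : ℕ}

/-- The vertices at distance exactly `n` from `x`. -/
noncomputable def sphere (G : SimpleGraph V) (x : V) (n : ℕ) : Finset V :=
  {y | G.edist x y = n}

/-- The vertices at distance at most `n` from `x`, in contrast to the open `SimpleGraph.ball`. -/
noncomputable def closedBall (G : SimpleGraph V) (x : V) (n : ℕ) : Finset V :=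
  {y | G.edist x y ≤ n}

theorem mem_sphere {x y : V} {n : ℕ} : y ∈ sphere G x n ↔ G.edist x y = n :=
  Finset.mem_filter_univ y

theorem mem_closedBall {x y : V} {n : ℕ} : y ∈ closedBall G x n ↔ G.edist x y ≤ n :=
  Finset.mem_filter_univ y

theorem exists_mem_sphere_adj {x y : V} {n : ℕ} (hy : y ∈ sphere G x (n + 1)) :
    ∃ w ∈ sphere G x n, G.Adj w y := by
  rw [mem_sphere] at hy
  obtain ⟨p, hp⟩ := SimpleGraph.exists_walk_of_edist_eq_coe hy
  have h_adj : G.Adj p.penultimate y :=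
    p.adj_penultimate (by rw [← SimpleGraph.Walk.length_eq_zero_iff]; omega)
  refine ⟨p.penultimate, mem_sphere.2 (le_antisymm ?_ ?_), h_adj⟩
  · simpa [hp] using SimpleGraph.edist_le p.dropLast
  · have h_tri : ((n + 1 : ℕ) : ℕ∞) ≤ G.edist x p.penultimate + 1 := calc
      ((n + 1 : ℕ) : ℕ∞) = G.edist x y := hy.symm
      _ ≤ G.edist x p.penultimate + G.edist p.penultimate y := SimpleGraph.edist_triangle
      _ = G.edist x p.penultimate + 1 := by rw [SimpleGraph.edist_eq_one_iff_adj.2 h_adj]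
    rw [Nat.cast_succ] at h_tri
    exact (ENat.add_le_add_iff_right ENat.one_ne_top).1 h_tri

theorem card_sphere_succ_le (hdeg : ∀ v, G.degree v ≤ d) (x : V) (n : ℕ) :
    (sphere G x (n + 1)).card ≤ d * (d - 1) ^ n := by
  induction n with
  | zero =>
    have h_sphere : sphere G x 1 = G.neighborFinset x := by
      ext y
      rw [mem_sphere, Nat.cast_one, SimpleGraph.edist_eq_one_iff_adj,
        SimpleGraph.mem_neighborFinset]
    simpa [h_sphere] using hdeg x
  | succ n ih =>
    set children : V → Finset V := fun w => {y ∈ G.neighborFinset w | y ∈ sphere G x (n + 2)}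
    have h_cover : sphere G x (n + 2) ⊆ (sphere G x (n + 1)).biUnion children := by
      intro y hy
      obtain ⟨w, hw, hwy⟩ := exists_mem_sphere_adj hy
      exact Finset.mem_biUnion.2 ⟨w, hw, by simpa [children] using ⟨hwy, hy⟩⟩
    have h_children : ∀ w ∈ sphere G x (n + 1), (children w).card ≤ d - 1 := by
      intro w hw
      obtain ⟨parent, h_parent, h_adj⟩ := exists_mem_sphere_adj hw
      have h_ssubset : children w ⊂ G.neighborFinset w := by
        refine Finset.filter_ssubset.2 ⟨parent, by simpa using h_adj.symm, fun h => ?_⟩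
        have : (n : ℕ∞) = (n + 2 : ℕ) := (mem_sphere.1 h_parent).symm.trans (mem_sphere.1 h)
        have := Nat.cast_inj.1 this
        omega
      exact Nat.le_sub_one_of_lt ((Finset.card_lt_card h_ssubset).trans_le (hdeg w))
    calc (sphere G x (n + 2)).card ≤ (sphere G x (n + 1)).card * (d - 1) :=
          (Finset.card_le_card h_cover).trans (Finset.card_biUnion_le_card_mul _ _ _ h_children)
      _ ≤ d * (d - 1) ^ n * (d - 1) := Nat.mul_le_mul_right _ ih
      _ = d * (d - 1) ^ (n + 1) := by rw [pow_succ, mul_assoc]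

theorem card_closedBall_le (hdeg : ∀ v, G.degree v ≤ d) (x : V) (n : ℕ) :
    (closedBall G x n).card ≤ 1 + d * ∑ i ∈ Finset.range n, (d - 1) ^ i := by
  induction n with
  | zero =>
    have h_ball : closedBall G x 0 = {x} := by
      ext y
      rw [mem_closedBall, Nat.cast_zero, nonpos_iff_eq_zero, SimpleGraph.edist_eq_zero_iff, eq_comm,
        Finset.mem_singleton]
    simp [h_ball]
  | succ n ih =>
    have h_cover : closedBall G x (n + 1) ⊆ closedBall G x n ∪ sphere G x (n + 1) := by
      intro y hy
      obtain ⟨k, hk, hkn⟩ := ENat.le_natCast_iff.1 (mem_closedBall.1 hy)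
      rw [Finset.mem_union, mem_closedBall, mem_sphere, hk, Nat.cast_le, Nat.cast_inj]
      omega
    calc (closedBall G x (n + 1)).card ≤ (closedBall G x n).card + (sphere G x (n + 1)).card :=
          (Finset.card_le_card h_cover).trans (Finset.card_union_le _ _)
      _ ≤ (1 + d * ∑ i ∈ Finset.range n, (d - 1) ^ i) + d * (d - 1) ^ n :=
        add_le_add ih (card_sphere_succ_le hdeg x n)
      _ = 1 + d * ∑ i ∈ Finset.range (n + 1), (d - 1) ^ i := by
        rw [Finset.sum_range_succ, mul_add, add_assoc]

theorem vol_eq_natCast (hd : 3 ≤ d) (n : ℕ) :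
    vol d n = ((1 + d * ∑ i ∈ Finset.range n, (d - 1) ^ i : ℕ) : ℝ) := by
  have hd_one : (d : ℝ) - 1 ≠ 1 := by
    have : (3 : ℝ) ≤ d := by exact_mod_cast hd
    linarith
  push_cast [Nat.cast_sub (by omega : 1 ≤ d)]
  rw [vol, geom_sum_eq hd_one, mul_div_assoc, sub_sub, one_add_one_eq_two]

theorem exists_pairwise_lt_edist {s : Finset V} {n b : ℕ}
    (hb : ∀ x, (closedBall G x n).card ≤ b) (hs : 2 * b < s.card) :
    ∃ r : Fin 3 → V, (∀ i, r i ∈ s) ∧ Pairwise fun i j => (n : ℕ∞) < G.edist (r i) (r j) := by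
  obtain ⟨x, hx⟩ : s.Nonempty := Finset.card_pos.1 (by omega)
  obtain ⟨y, hy, hyx⟩ : ∃ y ∈ s, y ∉ closedBall G x n :=
    Finset.exists_mem_notMem_of_card_lt_card (by have := hb x; omega)
  obtain ⟨z, hz, hzxy⟩ : ∃ z ∈ s, z ∉ closedBall G x n ∪ closedBall G y n :=
    Finset.exists_mem_notMem_of_card_lt_card (by
      have := Finset.card_union_le (closedBall G x n) (closedBall G y n)
      have := hb x
      have := hb y
      omega)
  simp only [Finset.mem_union, mem_closedBall, not_or, not_le] at hyx hzxy
  refine ⟨![x, y, z], by simp [Fin.forall_fin_succ, hx, hy, hz], ?_⟩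
  simp [Pairwise, Fin.forall_fin_succ, hyx, hzxy, SimpleGraph.edist_comm (u := y) (v := x),
    SimpleGraph.edist_comm (u := z)]

theorem Frontier.card_le {L U : Finset V} {t b : ℕ} (h : Frontier G L U)
    (hfree : ¬ (subdividedClaw t).IsIndContained G)
    (hb : ∀ x, (closedBall G x (2 * t)).card ≤ b) : L.card ≤ 2 * b := by
  by_contra! hL
  obtain ⟨r, hrL, hr⟩ := exists_pairwise_lt_edist hb hL
  have T : Tripod G L U 0 r fun _ => [] :=
    { foot_mem := hrL
      tail_mem := by simp
      length_eq := by simp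
      isInducedPath := fun _ => trivial
      anticomplete := fun i j hij => by
        have hne : r i ≠ r j := fun h_eq => by simpa [h_eq] using hr hij
        simpa [Anticomplete] using (G.compl_adj _ _).1 (h.compl_adj_of_ne (hrL i) (hrL j) hne) }
  exact hfree (h.isIndContained_of_tripod hr (by simp) T)

end Ball

/-! ### Admissible pairs -/

section Admissible

variable {V : Type*} [Fintype V] {G : SimpleGraph V} {u : V}

theorem sdiff_bdry_eq_sdiff_nbhd {X U : Finset V} (hX : X.Nonempty) (hXU : Disjoint X U) :
    U \ bdry G u X = U \ nbhd G X := by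
  ext v
  simp only [bdry, if_neg hX.ne_empty, Finset.mem_sdiff, Finset.mem_filter_univ, mem_nbhd,
    G.adj_comm v]
  refine and_congr_right fun hv => not_congr (and_iff_right fun hvX => ?_)
  exact Finset.disjoint_left.1 hXU hvX hv

theorem bdry_subset_nbhd {X : Finset V} (hX : X.Nonempty) : bdry G u X ⊆ nbhd G X := by
  intro v hv
  simp only [bdry, if_neg hX.ne_empty, Finset.mem_filter_univ, G.adj_comm v] at hv
  exact mem_nbhd.2 hv.2

theorem card_bdry_le {d : ℕ} (hdeg : ∀ v, G.degree v ≤ d) (X : Finset V) :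
    (bdry G u X).card ≤ max 1 (X.card * d) := by
  rcases X.eq_empty_or_nonempty with rfl | hX
  · simp [bdry]
  · exact le_max_of_le_right ((Finset.card_le_card (bdry_subset_nbhd hX)).trans
      (card_nbhd_le hdeg X))

theorem Admissible.frontier {L U : Finset V} (h : Admissible G u L U) (hL : L.Nonempty) :
    Frontier G L U := by
  induction h with
  | base => exact absurd hL Finset.not_nonempty_empty
  | root => exact .root u _ (by simp)
  | step L' U' L _ hne hsub hindep ih =>
    rcases L'.eq_empty_or_nonempty with rfl | hL'
    · have h_bdry : bdry G u ∅ = {u} := if_pos rfl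
      rw [h_bdry] at hsub ⊢
      exact isPeel_singleton U' u L (by rwa [Finset.inter_comm]) hne
        (isIndepSet_iff_forall_not_adj.2 hindep)
    · have hF := ih hL'
      rw [sdiff_bdry_eq_sdiff_nbhd hL' hF.disjoint]
      refine .step L' U' L hF hne ?_ (isIndepSet_iff_forall_not_adj.2 hindep)
      rw [Finset.inter_comm]
      exact hsub.trans (Finset.inter_subset_inter_right (bdry_subset_nbhd hL'))

theorem Admissible.isPeel_bdry {L U : Finset V} (h : Admissible G u L U) :
    IsPeel G U (bdry G u L) := by
  intro S hS hne hindep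
  rw [Finset.inter_comm] at hS
  exact (h.step L U S hne hS (isIndepSet_iff_forall_not_adj.1 hindep)).frontier hne

end Admissible

/-- with `r = 2·vol(Δ, 2t)`, if `G` is `S_{t,t,t}`-free of maximum
degree at most `Δ` and all products of at most `r` weights lie in `R(2^{Δr})`,
then for every admissible pair `(L, U)` one has `Z(U) ≠ 0`, `Z(U ∖ ∂L) ≠ 0` and
`Z(U)/Z(U ∖ ∂L) ∈ H(1/2)`; in particular `Z_{G,λ} ≠ 0`. -/
theorem stmt6 (t Δ : ℕ) (ht : 1 ≤ t) (hΔ : 3 ≤ Δ)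
    {V : Type} [Fintype V] (G : SimpleGraph V)
    (hfree : IsEmpty (subdividedClaw t ↪g G))
    (hdeg : ∀ v : V, (G.neighborSet v).ncard ≤ Δ)
    (lam : V → ℂ)
    (hlam : ∀ S : Finset V, (S.card : ℝ) ≤ 2 * vol Δ (2 * t) →
      (∏ v ∈ S, lam v) ∈ parabR ((2 : ℝ) ^ ((Δ : ℝ) * (2 * vol Δ (2 * t)))))
    (u : V) (L U : Finset V) (h : Admissible G u L U) :
    (indepPolyOn G lam U ≠ 0 ∧ indepPolyOn G lam (U \ bdry G u L) ≠ 0) ∧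
    indepPolyOn G lam U / indepPolyOn G lam (U \ bdry G u L) ∈ halfH (1 / 2) ∧
    indepPoly G lam ≠ 0 := by
  have hdeg' : ∀ v, G.degree v ≤ Δ := fun v => by
    rw [← SimpleGraph.card_neighborSet_eq_degree, ← Nat.card_eq_fintype_card]
    exact hdeg v
  rw [vol_eq_natCast hΔ] at hlam
  set b := 1 + Δ * ∑ i ∈ Finset.range (2 * t), (Δ - 1) ^ i
  have hpow : (2 : ℝ) ^ ((Δ : ℝ) * (2 * b)) = 2 ^ (Δ * (2 * b)) := by
    exact_mod_cast Real.rpow_natCast 2 (Δ * (2 * b))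
  have hΔb : 1 ≤ Δ * (2 * b) := Nat.mul_pos (by omega) (by omega)
  have hcard : ∀ L U, Frontier G L U → L.card ≤ 2 * b := fun L U hF =>
    hF.card_le (not_nonempty_iff.2 hfree) fun x => card_closedBall_le hdeg' x (2 * t)
  have hnbhd : ∀ {X : Finset V}, X.card ≤ 2 * b → X.card * Δ ≤ Δ * (2 * b) := fun hX => by
    rw [mul_comm]
    exact Nat.mul_le_mul_left Δ hX
  have hZ := indepPolyOn_ne_zero_and_half_le_re_div hΔb
    (fun L U hF => (card_nbhd_le hdeg' L).trans (hnbhd (hcard L U hF)))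
    (fun L U hF => hpow ▸ hlam L (by exact_mod_cast hcard L U hF))
  have hbdry : (bdry G u L).card ≤ Δ * (2 * b) := by
    rcases L.eq_empty_or_nonempty with rfl | hL
    · exact (card_bdry_le hdeg' ∅).trans (by simpa using hΔb)
    · exact (card_bdry_le hdeg' L).trans (max_le hΔb (hnbhd (hcard L U (h.frontier hL))))
  exact ⟨⟨(hZ U).1, (hZ _).1⟩, (hZ U).2 _ hbdry h.isPeel_bdry, (hZ Finset.univ).1⟩
end

section
/- Let G be a finite claw-free simple graph each of whose connected components contains a simplicial clique, and let X ⊆ V(G). Then the induced subgraph G' = G[V(G) ∖ X] is also a claw-free graph each of whose connected components contains a simplicial clique. In other words, the class of claw-free graphs whose every connected component has a simplicial clique is hereditary. -/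
attribute [local instance] Classical.propDecidable

/-- `K` is a simplicial clique in `G`: `K` is a clique and, for every `v ∈ K`,
the neighbours of `v` outside `K` induce a clique. -/
def IsSimplicialClique {V : Type*} (G : SimpleGraph V) (K : Set V) : Prop :=
  G.IsClique K ∧ ∀ v ∈ K, G.IsClique {w : V | G.Adj v w ∧ w ∉ K}

/-- Every connected component of `G` contains a (nonempty) simplicial clique. -/
def EveryComponentHasSimplicialClique {V : Type*} (G : SimpleGraph V) : Prop :=
  ∀ c : G.ConnectedComponent, ∃ K : Set V, K.Nonempty ∧
    (∀ v ∈ K, G.connectedComponentMk v = c) ∧ IsSimplicialClique G K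

/-!
Let `C` be a component of an induced subgraph of the claw-free graph `G`, and `K` a simplicial
clique in the component of `G` around `C`. If `K` meets `C`, then `K ∩ C` is simplicial. Otherwise
it is enough to find a vertex `q ∉ C` for which `N(q) ∩ C` is a nonempty clique: this clique is
then simplicial, since for `v ∈ N(q) ∩ C` two nonadjacent neighbours of `v` in `C \ N(q)` would
form a claw centred at `v` with `q`.

To find `q`, walk from `K` to `C`. At the start `k ∈ K`, simpliciality of `K` makes `N(k) ∩ C` a
clique. As long as `N(u) ∩ C = ∅`, the next vertex `u'` of the walk lies outside `C`, and
`N(u') ∩ C` is again a clique, as two nonadjacent vertices in it would form a claw centred at `u'`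
with `u`. Hence the first vertex of the walk with a neighbour in `C` can be taken as `q`.
-/

theorem subdividedClaw_one_adj_none_some (p : Fin 3 × Fin 1) :
    (subdividedClaw 1).Adj none (some p) := by
  simp [subdividedClaw]

theorem subdividedClaw_one_not_adj_some_some (p q : Fin 3 × Fin 1) :
    ¬ (subdividedClaw 1).Adj (some p) (some q) := by
  simp [subdividedClaw]

section

variable {V W : Type*} {G : SimpleGraph V} {H : SimpleGraph W}

theorem nonempty_subdividedClaw_one_embedding {v : V} {leaf : Fin 3 → V}
    (hinj : leaf.Injective) (hadj : ∀ i, G.Adj v (leaf i))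
    (hindep : ∀ i j, ¬ G.Adj (leaf i) (leaf j)) : Nonempty (subdividedClaw 1 ↪g G) := by
  refine ⟨⟨⟨fun x => x.elim v fun p => leaf p.1, ?_⟩, ?_⟩⟩
  · rintro (_ | p) (_ | q) h
    · rfl
    · exact absurd h (hadj q.1).ne
    · exact absurd h.symm (hadj p.1).ne
    · exact congrArg some (Prod.ext (hinj h) (Subsingleton.elim _ _))
  · rintro (_ | p) (_ | q)
    · exact iff_of_false G.irrefl (SimpleGraph.irrefl _)
    · exact iff_of_true (hadj q.1) (subdividedClaw_one_adj_none_some q)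
    · exact iff_of_true (hadj p.1).symm (subdividedClaw_one_adj_none_some p).symm
    · exact iff_of_false (hindep p.1 q.1) (subdividedClaw_one_not_adj_some_some p q)

theorem isClique_neighborSet_diff_of_adj (hclaw : IsEmpty (subdividedClaw 1 ↪g G)) {u v : V}
    (huv : G.Adj v u) : G.IsClique (G.neighborSet v \ insert u (G.neighborSet u)) := by
  rintro a ⟨hva, ha⟩ b ⟨hvb, hb⟩ hab
  simp only [Set.mem_insert_iff, SimpleGraph.mem_neighborSet, not_or] at hva ha hvb hb
  by_contra hnadj
  refine not_nonempty_iff.mpr hclaw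
    (nonempty_subdividedClaw_one_embedding (v := v) (leaf := ![u, a, b]) ?_ ?_ ?_)
  · simp [Function.Injective, Fin.forall_fin_succ, ha.1, hb.1, hab, Ne.symm ha.1, Ne.symm hb.1,
      hab.symm]
  · simp [Fin.forall_fin_succ, huv, hva, hvb]
  · simp [Fin.forall_fin_succ, ha.2, hb.2, hnadj, mt SimpleGraph.Adj.symm hnadj,
      G.adj_comm a u, G.adj_comm b u]

theorem exists_notMem_isClique_neighborSet_inter (hclaw : IsEmpty (subdividedClaw 1 ↪g G))
    {D : Set V} {u w : V} (huw : G.Reachable u w) (hw : w ∈ D) (hu : u ∉ D)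
    (hclique : G.IsClique (G.neighborSet u ∩ D)) :
    ∃ q ∉ D, (G.neighborSet q ∩ D).Nonempty ∧ G.IsClique (G.neighborSet q ∩ D) := by
  obtain ⟨p⟩ := huw
  induction p with
  | nil => exact absurd hw hu
  | @cons u u' _ huu' _ ih =>
    by_cases hne : (G.neighborSet u ∩ D).Nonempty
    · exact ⟨u, hu, hne, hclique⟩
    · have hdisj : ∀ x ∈ D, ¬ G.Adj u x := fun x hx hux => hne ⟨x, hux, hx⟩
      refine ih hw (fun hu' => hdisj u' hu' huu')
        (.subset ?_ (isClique_neighborSet_diff_of_adj hclaw huu'.symm))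
      rintro x ⟨hx, hxD⟩
      exact ⟨hx, fun h => h.elim (fun hxu => hu (hxu ▸ hxD)) (hdisj x hxD)⟩

theorem isClique_preimage (f : H ↪g G) {K : Set V} (hK : G.IsClique K) : H.IsClique (f ⁻¹' K) :=
  fun _ ha _ hb hab => f.map_adj_iff.mp (hK ha hb (f.injective.ne hab))

theorem IsSimplicialClique.preimage (f : H ↪g G) {K : Set V} (hK : IsSimplicialClique G K) :
    IsSimplicialClique H (f ⁻¹' K) := by
  refine ⟨isClique_preimage f hK.1, fun v hv =>
    .subset ?_ (isClique_preimage f (hK.2 (f v) hv))⟩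
  rintro w ⟨hvw, hw⟩
  exact ⟨f.map_adj_iff.mpr hvw, hw⟩

theorem IsSimplicialClique.inter_supp {K : Set V} (hK : IsSimplicialClique G K)
    (c : G.ConnectedComponent) : IsSimplicialClique G (K ∩ c.supp) := by
  refine ⟨hK.1.inter_left c.supp, fun v ⟨hvK, hvc⟩ => .subset ?_ (hK.2 v hvK)⟩
  rintro w ⟨hvw, hw⟩
  exact ⟨hvw, fun hwK => hw ⟨hwK, c.mem_supp_of_adj_mem_supp hvc hvw⟩⟩

theorem isSimplicialClique_preimage_neighborSet_inter_supp
    (hclaw : IsEmpty (subdividedClaw 1 ↪g G)) (f : H ↪g G) (c : H.ConnectedComponent) {q : V}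
    (hq : q ∉ f '' c.supp) (hclique : G.IsClique (G.neighborSet q ∩ f '' c.supp)) :
    IsSimplicialClique H (f ⁻¹' G.neighborSet q ∩ c.supp) := by
  have hsub : f ⁻¹' G.neighborSet q ∩ c.supp ⊆ f ⁻¹' (G.neighborSet q ∩ f '' c.supp) :=
    fun w ⟨hqw, hwc⟩ => ⟨hqw, w, hwc, rfl⟩
  refine ⟨.subset hsub (isClique_preimage f hclique), ?_⟩
  rintro v ⟨hqv, hvc⟩
  refine .subset ?_ (isClique_preimage f
    (isClique_neighborSet_diff_of_adj hclaw (SimpleGraph.Adj.symm hqv)))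
  rintro w ⟨hvw, hw⟩
  have hwc : w ∈ c.supp := c.mem_supp_of_adj_mem_supp hvc hvw
  exact ⟨f.map_adj_iff.mpr hvw,
    fun h => h.elim (fun hwq => hq ⟨w, hwc, hwq⟩) fun hqw => hw ⟨hqw, hwc⟩⟩

theorem EveryComponentHasSimplicialClique.of_embedding
    (hsimp : EveryComponentHasSimplicialClique G) (hclaw : IsEmpty (subdividedClaw 1 ↪g G))
    (f : H ↪g G) : EveryComponentHasSimplicialClique H := by
  intro c
  obtain ⟨v, hv⟩ := c.nonempty_supp
  obtain ⟨K, ⟨k, hk⟩, hKc, hK⟩ := hsimp (G.connectedComponentMk (f v))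
  by_cases hmeet : (f ⁻¹' K ∩ c.supp).Nonempty
  · exact ⟨_, hmeet, fun _ hx => hx.2, (hK.preimage f).inter_supp c⟩
  have hdisj : ∀ x ∈ f '' c.supp, x ∉ K := by
    rintro _ ⟨w, hw, rfl⟩ hwK
    exact hmeet ⟨w, hwK, hw⟩
  have hkclique : G.IsClique (G.neighborSet k ∩ f '' c.supp) := by
    refine .subset ?_ (hK.2 k hk)
    exact fun x ⟨hkx, hx⟩ => ⟨hkx, hdisj x hx⟩
  have hreach : G.Reachable k (f v) := SimpleGraph.ConnectedComponent.exact (hKc k hk)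
  obtain ⟨q, hq, ⟨_, hqw, w, hw, rfl⟩, hclique⟩ :=
    exists_notMem_isClique_neighborSet_inter hclaw hreach (Set.mem_image_of_mem f hv)
      (fun h => hdisj k h hk) hkclique
  exact ⟨f ⁻¹' G.neighborSet q ∩ c.supp, ⟨w, hqw, hw⟩, fun _ hx => hx.2,
    isSimplicialClique_preimage_neighborSet_inter_supp hclaw f c hq hclique⟩

theorem stmt8_general (hclaw : IsEmpty (subdividedClaw 1 ↪g G))
    (hsimp : EveryComponentHasSimplicialClique G) (f : H ↪g G) :
    IsEmpty (subdividedClaw 1 ↪g H) ∧ EveryComponentHasSimplicialClique H :=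
  ⟨⟨fun g => hclaw.false (g.trans f)⟩, hsimp.of_embedding hclaw f⟩

end

/-- the class of (finite) claw-free graphs whose every connected
component contains a simplicial clique is hereditary: deleting any set of
vertices `X` yields again a claw-free graph each of whose connected components
contains a simplicial clique. -/
theorem stmt8 {V : Type} [Fintype V] (G : SimpleGraph V)
    (hclaw : IsEmpty (subdividedClaw 1 ↪g G))
    (hsimp : EveryComponentHasSimplicialClique G)
    (X : Set V) :
    IsEmpty (subdividedClaw 1 ↪g (G.induce Xᶜ)) ∧
    EveryComponentHasSimplicialClique (G.induce Xᶜ) :=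
  stmt8_general hclaw hsimp (SimpleGraph.Embedding.induce Xᶜ)
end

section
/- There is no open set S ⊆ ℂ containing the entire ray [0, ∞) that is a multivariate zero-free region for the family {C_{2n}[2K₁] : n ≥ 1}. That is, for every open S ⊆ ℂ with [0, ∞) ⊆ S, there exist a positive integer n and a weighting λ : [2n]×[2] → S of the vertices of C_{2n}[2K₁] such that Z_{C_{2n}[2K₁],λ} = 0. -/
attribute [local instance] Classical.propDecidable

/-- The sparse blown-up cycle `C_m[2K₁]`: vertex set `[m] × [2]`; `(i,j)` and
`(i',j')` are adjacent iff `i' − i ≡ ±1 (mod m)` (no edges within a column). -/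
def blowCyc2 (m : ℕ) : SimpleGraph (Fin m × Fin 2) :=
  SimpleGraph.fromRel (fun a b => ((a.1 : ℕ) + 1) % m = (b.1 : ℕ))


/-! For a weight `μ` on the even and `ν` on the odd vertices, the transfer matrix of a cycle of
length `2n` gives `Z = tr Bⁿ`, where `B` is a `2 × 2` matrix of trace `1 + μ + ν` and determinant
`μν`. Hence `Z` vanishes as soon as `(1 + μ + ν)² = 4 cos² (π / 2n) μν`. Replacing every vertex by
two copies of weights `x` and `y` has the effect of giving it the weight `(1 + x)(1 + y) - 1`. Use
`x` and `b` on the even vertices, `x` and `0` on the odd ones. After division by `(1 + x)²` the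
equation above is a monic quadratic in `b`, whose constant term tends to `4 sin² (π / 2n)` as
`x → ∞`. So for `n` and `x` large it has a root `b` close to `0`. -/

open Filter Finset Topology Bornology SimpleGraph

section Blowup

lemma eq_of_sum_powerset_eq {α M : Type*} [AddCancelCommMonoid M] {f g : Finset α → M}
    (h : ∀ T : Finset α, ∑ U ∈ T.powerset, f U = ∑ U ∈ T.powerset, g U) : f = g := by
  funext T
  induction T using Finset.strongInduction with
  | H T ih =>
    have hproper : ∑ U ∈ T.powerset.erase T, f U = ∑ U ∈ T.powerset.erase T, g U :=
      sum_congr rfl fun U hU ↦ ih U <| by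
        rwa [mem_erase, mem_powerset, and_comm, ← Finset.ssubset_iff_subset_ne] at hU
    have hT := h T
    rw [← add_sum_erase _ f (mem_powerset_self T), ← add_sum_erase _ g (mem_powerset_self T),
      hproper] at hT
    exact add_right_cancel hT

variable {V W : Type*} [Fintype W]

-- By Möbius inversion, it suffices to sum both sides over all subsets of `T`.
lemma sum_image_eq_prod {R : Type*} [CommRing R] (f : W → V) (lam : W → R) (T : Finset V) :
    ∑ S with S.image f = T, ∏ w ∈ S, lam w = ∏ v ∈ T, (∏ w with f w = v, (1 + lam w) - 1) := by
  refine congrFun (eq_of_sum_powerset_eq (f := fun T ↦ ∑ S with S.image f = T, ∏ w ∈ S, lam w)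
    (g := fun T ↦ ∏ v ∈ T, (∏ w with f w = v, (1 + lam w) - 1)) fun T ↦ ?_) T
  calc ∑ U ∈ T.powerset, ∑ S with S.image f = U, ∏ w ∈ S, lam w
      = ∑ S with S.image f ∈ T.powerset, ∏ w ∈ S, lam w := sum_fiberwise_eq_sum_filter ..
    _ = ∑ S ∈ ({w | f w ∈ T} : Finset W).powerset, ∏ w ∈ S, lam w := by
        congr 1; ext S; simp [subset_iff]
    _ = ∏ w with f w ∈ T, (1 + lam w) := (prod_one_add _).symm
    _ = ∏ v ∈ T, ∏ w with f w = v, (1 + lam w) := (prod_fiberwise_eq_prod_filter ..).symm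
    _ = ∏ v ∈ T, (1 + (∏ w with f w = v, (1 + lam w) - 1)) := by simp only [add_sub_cancel]
    _ = ∑ U ∈ T.powerset, ∏ v ∈ U, (∏ w with f w = v, (1 + lam w) - 1) := prod_one_add _

variable [Fintype V]

lemma indepPoly_eq_sum (G : SimpleGraph V) (lam : V → ℂ) :
    indepPoly G lam = ∑ S with ∀ u ∈ S, ∀ v ∈ S, ¬ G.Adj u v, ∏ v ∈ S, lam v := by
  rw [indepPoly, indepPolyOn, powerset_univ, sum_filter]

lemma indepPoly_comap (G : SimpleGraph V) (f : W → V) (lam : W → ℂ) :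
    indepPoly (G.comap f) lam = indepPoly G fun v ↦ ∏ w with f w = v, (1 + lam w) - 1 := by
  simp only [indepPoly_eq_sum, ← sum_image_eq_prod]
  rw [sum_fiberwise_eq_sum_filter]
  simp

lemma blowCyc2_eq_comap_cycleGraph {m : ℕ} (hm : 2 ≤ m) :
    blowCyc2 m = (cycleGraph m).comap Prod.fst := by
  obtain ⟨k, rfl⟩ := Nat.exists_eq_add_of_le' hm
  have succ_iff (a b : Fin (k + 2)) : ((a : ℕ) + 1) % (k + 2) = b ↔ b - a = 1 := by
    rw [sub_eq_iff_eq_add', eq_comm (a := b), Fin.ext_iff, Fin.val_add, Fin.val_one]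
  ext a b
  have ne_of_adj (h : (cycleGraph (k + 2)).Adj a.1 b.1) : a ≠ b := fun hab ↦ h.ne (hab ▸ rfl)
  rw [cycleGraph_adj] at ne_of_adj
  rw [blowCyc2, fromRel_adj, comap_adj, cycleGraph_adj, succ_iff, succ_iff]
  tauto

end Blowup

section TransferMatrix

variable {σ R : Type*} [Fintype σ] [DecidableEq σ] [CommSemiring R]

lemma matrix_prod_ofFn_apply {k : ℕ} (M : Fin (k + 1) → Matrix σ σ R) (x y : σ) :
    (List.ofFn M).prod x y =
      ∑ f : Fin k → σ,
        ∏ i, M i (Fin.cons (α := fun _ ↦ σ) x f i) (Fin.snoc (α := fun _ ↦ σ) f y i) := by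
  induction k generalizing x with
  | zero => simp [Fin.snoc]
  | succ k ih =>
    rw [List.ofFn_succ, List.prod_cons, Matrix.mul_apply,
      ← (Fin.consEquiv fun _ ↦ σ).sum_comp, Fintype.sum_prod_type]
    refine sum_congr rfl fun z _ ↦ ?_
    rw [ih, mul_sum]
    refine sum_congr rfl fun f _ ↦ ?_
    simp [Fin.prod_univ_succ (n := k + 1), Fin.consEquiv, ← Fin.cons_snoc_eq_snoc_cons]

lemma trace_prod_ofFn {k : ℕ} (M : Fin (k + 1) → Matrix σ σ R) :
    (List.ofFn M).prod.trace = ∑ f : Fin (k + 1) → σ, ∏ i, M i (f i) (f (i + 1)) := by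
  rw [← (Fin.consEquiv fun _ ↦ σ).sum_comp, Fintype.sum_prod_type]
  simp only [Matrix.trace, Matrix.diag_apply, matrix_prod_ofFn_apply, Fin.snoc_eq_cons_rotate,
    finRotate_apply]
  rfl

/-- The transfer matrix of the hard-core model at a vertex of weight `z`: rows are indexed by the
occupation number of the vertex, columns by that of the next one. -/
def hardCoreTransfer (z : ℂ) : Matrix (Fin 2) (Fin 2) ℂ := !![1, 1; z, 0]

lemma hardCoreTransfer_apply (z : ℂ) (x y : Fin 2) :
    hardCoreTransfer z x y = if x = 1 then if y = 1 then 0 else z else 1 := by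
  fin_cases x <;> fin_cases y <;> rfl

lemma cycleGraph_indep_iff {k : ℕ} (S : Finset (Fin (k + 2))) :
    (∀ u ∈ S, ∀ v ∈ S, ¬ (cycleGraph (k + 2)).Adj u v) ↔ ∀ i ∈ S, i + 1 ∉ S := by
  simp only [cycleGraph_adj, sub_eq_iff_eq_add']
  constructor
  · exact fun h i hi hi' ↦ h i hi _ hi' (.inr rfl)
  · rintro h u hu v hv (rfl | rfl)
    exacts [h v hv hu, h u hu hv]

lemma prod_hardCoreTransfer {k : ℕ} (lam : Fin (k + 2) → ℂ) (f : Fin (k + 2) → Fin 2) :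
    ∏ i, hardCoreTransfer (lam i) (f i) (f (i + 1)) =
      if ∀ i, f i = 1 → f (i + 1) ≠ 1 then ∏ i with f i = 1, lam i else 0 := by
  simp only [hardCoreTransfer_apply]
  split_ifs with h
  · rw [prod_filter]
    exact prod_congr rfl fun i _ ↦ by grind
  · push Not at h
    obtain ⟨i, hi, hi'⟩ := h
    exact prod_eq_zero (mem_univ i) (by simp [hi, hi'])

lemma indepPoly_cycleGraph {m : ℕ} (hm : 2 ≤ m) (lam : Fin m → ℂ) :
    indepPoly (cycleGraph m) lam = (List.ofFn fun i ↦ hardCoreTransfer (lam i)).prod.trace := by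
  obtain ⟨k, rfl⟩ := Nat.exists_eq_add_of_le' hm
  simp only [trace_prod_ofFn, prod_hardCoreTransfer, indepPoly_eq_sum, cycleGraph_indep_iff,
    sum_filter]
  refine sum_bij' (fun S _ i ↦ if i ∈ S then 1 else 0) (fun f _ ↦ ({i | f i = 1} : Finset _))
    ?_ ?_ ?_ ?_ ?_
  · simp
  · simp
  · simp
  · exact fun f _ ↦ by funext i; simp only [mem_filter_univ]; grind
  · simp

lemma indepPoly_cycleGraph_alternating {n : ℕ} (hn : n ≠ 0) (μ ν : ℂ) :
    indepPoly (cycleGraph (2 * n)) (fun i ↦ if Even (i : ℕ) then μ else ν) =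
      ((hardCoreTransfer μ * hardCoreTransfer ν) ^ n).trace := by
  rw [indepPoly_cycleGraph (by lia), List.ofFn_mul']
  simp [List.prod_flatten, List.ofFn_const, parity_simps]

end TransferMatrix

section Zeros

lemma trace_pow_add_two {R : Type*} [CommRing R] (B : Matrix (Fin 2) (Fin 2) R) (n : ℕ) :
    (B ^ (n + 2)).trace = B.trace * (B ^ (n + 1)).trace - B.det * (B ^ n).trace := by
  have cayley_hamilton : B ^ 2 = B.trace • B - B.det • 1 := by
    ext i j
    fin_cases i <;> fin_cases j <;>
      simp [pow_two, Matrix.mul_apply, Matrix.trace_fin_two, Matrix.det_fin_two] <;> ring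
  rw [pow_add, cayley_hamilton, mul_sub, mul_smul_comm, mul_smul_comm, mul_one, ← pow_succ,
    Matrix.trace_sub, Matrix.trace_smul, Matrix.trace_smul, smul_eq_mul, smul_eq_mul]

lemma trace_pow_eq_two_mul_cos {B : Matrix (Fin 2) (Fin 2) ℂ} {ρ θ : ℂ}
    (htrace : B.trace = 2 * ρ * Complex.cos θ) (hdet : B.det = ρ ^ 2) (n : ℕ) :
    (B ^ n).trace = 2 * ρ ^ n * Complex.cos (n * θ) := by
  induction n using Nat.twoStepInduction with
  | zero => simp
  | one => simp [htrace]
  | more n ih₀ ih₁ =>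
    have cos_recurrence : Complex.cos ((n + 2) * θ) =
        2 * Complex.cos θ * Complex.cos ((n + 1) * θ) - Complex.cos (n * θ) := by
      have h := Complex.cos_add_cos ((n + 2) * θ) (n * θ)
      ring_nf at h ⊢
      linear_combination h
    rw [trace_pow_add_two, ih₀, ih₁, htrace, hdet]
    push_cast
    rw [cos_recurrence]
    ring

lemma trace_pow_eq_zero_of_trace_sq_eq {B : Matrix (Fin 2) (Fin 2) ℂ} {n : ℕ} (hn : n ≠ 0)
    (h : B.trace ^ 2 = 4 * Complex.cos (Real.pi / (2 * n)) ^ 2 * B.det) : (B ^ n).trace = 0 := by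
  obtain ⟨r, hr⟩ := IsAlgClosed.exists_pow_nat_eq B.det two_pos
  obtain ⟨ρ, hdet, htrace⟩ :
      ∃ ρ, B.det = ρ ^ 2 ∧ B.trace = 2 * ρ * Complex.cos (Real.pi / (2 * n)) := by
    have hsq : B.trace ^ 2 = (2 * r * Complex.cos (Real.pi / (2 * n))) ^ 2 := by
      rw [h, ← hr]; ring
    rcases sq_eq_sq_iff_eq_or_eq_neg.mp hsq with hpos | hneg
    · exact ⟨r, hr.symm, hpos⟩
    · exact ⟨-r, by rw [neg_sq, hr], by rw [hneg]; ring⟩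
  have hangle : n * (Real.pi / (2 * n) : ℂ) = Real.pi / 2 := by field_simp
  rw [trace_pow_eq_two_mul_cos htrace hdet, hangle, Complex.cos_pi_div_two, mul_zero]

lemma indepPoly_cycleGraph_alternating_eq_zero {n : ℕ} (hn : n ≠ 0) {μ ν : ℂ}
    (h : (1 + μ + ν) ^ 2 = 4 * Complex.cos (Real.pi / (2 * n)) ^ 2 * (μ * ν)) :
    indepPoly (cycleGraph (2 * n)) (fun i ↦ if Even (i : ℕ) then μ else ν) = 0 := by
  have htrace : (hardCoreTransfer μ * hardCoreTransfer ν).trace = 1 + μ + ν := by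
    simp [hardCoreTransfer, Matrix.trace_fin_two]; ring
  have hdet : (hardCoreTransfer μ * hardCoreTransfer ν).det = μ * ν := by
    simp [hardCoreTransfer]; ring
  rw [indepPoly_cycleGraph_alternating hn]
  exact trace_pow_eq_zero_of_trace_sq_eq hn (by rw [htrace, hdet, h])

lemma indepPoly_blowCyc2_alternating_eq_zero {n : ℕ} (hn : n ≠ 0) {x y z w : ℂ}
    (h : ((1 + x) * (1 + y) + (1 + z) * (1 + w) - 1) ^ 2 = 4 * Complex.cos (Real.pi / (2 * n)) ^ 2 *
      (((1 + x) * (1 + y) - 1) * ((1 + z) * (1 + w) - 1))) :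
    indepPoly (blowCyc2 (2 * n)) (fun v ↦ if Even (v.1 : ℕ) then ![x, y] v.2 else ![z, w] v.2) =
      0 := by
  rw [blowCyc2_eq_comap_cycleGraph (by lia), indepPoly_comap,
    ← indepPoly_cycleGraph_alternating_eq_zero hn (μ := (1 + x) * (1 + y) - 1)
      (ν := (1 + z) * (1 + w) - 1) (by rw [← h]; ring)]
  congr 1
  funext i
  simp only [prod_filter, Fintype.prod_prod_type]
  split_ifs <;> simp [*]

end Zeros

section SmallRoots

variable {K : Type*} [NormedField K] [IsAlgClosed K]

lemma exists_quadratic_root_norm_sq_le (B C : K) :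
    ∃ b, b ^ 2 + B * b + C = 0 ∧ ‖b‖ ^ 2 ≤ ‖C‖ := by
  obtain ⟨r, hr⟩ := IsAlgClosed.exists_root
    (Polynomial.C 1 * Polynomial.X ^ 2 + Polynomial.C B * Polynomial.X + Polynomial.C C)
    (by rw [Polynomial.degree_quadratic one_ne_zero]; decide)
  have hroot : r ^ 2 + B * r + C = 0 := by simpa using hr
  have hprod : ‖r‖ * ‖-B - r‖ = ‖C‖ := by
    rw [← norm_mul]; congr 1; linear_combination -hroot
  rcases le_total ‖r‖ ‖-B - r‖ with hle | hle
  · exact ⟨r, hroot, by rw [← hprod, sq]; gcongr⟩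
  · exact ⟨-B - r, by linear_combination hroot, by rw [← hprod, sq]; gcongr⟩

lemma eventually_exists_quadratic_root_mem {ι : Type*} {l : Filter ι} {B C : ι → K}
    (hC : Tendsto C l (𝓝 0)) {U : Set K} (hU : U ∈ 𝓝 0) :
    ∀ᶠ i in l, ∃ b ∈ U, b ^ 2 + B i * b + C i = 0 := by
  obtain ⟨ε, hε, hball⟩ := Metric.mem_nhds_iff.mp hU
  filter_upwards [hC (Metric.ball_mem_nhds 0 (pow_pos hε 2))] with i hi
  obtain ⟨b, hroot, hle⟩ := exists_quadratic_root_norm_sq_le (B i) (C i)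
  refine ⟨b, hball (mem_ball_zero_iff.mpr ?_), hroot⟩
  exact lt_of_pow_lt_pow_left₀ 2 hε.le (hle.trans_lt (mem_ball_zero_iff.mp hi))

end SmallRoots

lemma tendsto_cos_pi_div_two_mul_atTop :
    Tendsto (fun n : ℕ ↦ Complex.cos (Real.pi / (2 * n))) atTop (𝓝 1) := by
  have hangle : Tendsto (fun n : ℕ ↦ (Real.pi / (2 * n) : ℂ)) atTop (𝓝 0) := by
    simpa only [div_mul_eq_div_div] using
      tendsto_const_div_atTop_nhds_zero_nat (Real.pi / 2 : ℂ)
  simpa [Function.comp_def] using (Complex.continuous_cos.tendsto 0).comp hangle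

lemma eventually_exists_mem_alternating_eq {U : Set ℂ} (hU : U ∈ 𝓝 0) :
    ∀ᶠ n : ℕ in atTop, ∀ᶠ x in cobounded ℂ, ∃ b ∈ U,
      ((1 + x) * (2 + b) - 1) ^ 2 =
        4 * Complex.cos (Real.pi / (2 * n)) ^ 2 * (((1 + x) * (1 + b) - 1) * x) := by
  have hinv : Tendsto (fun x : ℂ ↦ (1 + x)⁻¹) (cobounded ℂ) (𝓝 0) :=
    tendsto_inv₀_cobounded.comp (tendsto_const_add_cobounded 1)
  have hconst : Tendsto (fun p : ℂ × ℂ ↦ (2 - p.2) ^ 2 - 4 * p.1 ^ 2 * (1 - p.2) ^ 2)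
      (𝓝 1 ×ˢ 𝓝 0) (𝓝 0) := by
    rw [← nhds_prod_eq]
    exact Continuous.tendsto' (by fun_prop) _ _ (by norm_num)
  have hroot := eventually_exists_quadratic_root_mem
    (B := fun p : ℕ × ℂ ↦ 2 * (2 - (1 + p.2)⁻¹) -
      4 * Complex.cos (Real.pi / (2 * p.1)) ^ 2 * (1 - (1 + p.2)⁻¹))
    (hconst.comp (tendsto_cos_pi_div_two_mul_atTop.prodMap hinv)) hU
  filter_upwards [hroot.curry] with n hn
  filter_upwards [hn, eventually_ne_cobounded (-1)] with x ⟨b, hbU, hb⟩ hx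
  have hx' : 1 + x ≠ 0 := fun h ↦ hx (by linear_combination h)
  refine ⟨b, hbU, ?_⟩
  simp only [Function.comp_apply, Prod.map_apply] at hb
  field_simp at hb
  linear_combination hb

theorem stmt13_general {S : Set ℂ} (hS : S ∈ 𝓝 0) (hunbounded : ¬ IsBounded S) :
    ∀ᶠ n : ℕ in atTop, ∃ lam : Fin (2 * n) × Fin 2 → ℂ,
      (∀ v, lam v ∈ S) ∧ indepPoly (blowCyc2 (2 * n)) lam = 0 := by
  have hfrequently : ∃ᶠ x in cobounded ℂ, x ∈ S := hunbounded
  filter_upwards [eventually_exists_mem_alternating_eq hS, eventually_ne_atTop 0] with n hn hn0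
  obtain ⟨x, hxS, b, hbS, hb⟩ := (hfrequently.and_eventually hn).exists
  refine ⟨_, fun v ↦ ?_, indepPoly_blowCyc2_alternating_eq_zero hn0 (x := x) (y := b) (z := x)
    (w := 0) (by linear_combination hb)⟩
  have h0S : (0 : ℂ) ∈ S := mem_of_mem_nhds hS
  obtain ⟨i, j⟩ := v
  fin_cases j <;> split_ifs <;> assumption

lemma not_isBounded_of_ray_subset {S : Set ℂ} (hray : ∀ x : ℝ, 0 ≤ x → (x : ℂ) ∈ S) :
    ¬ IsBounded S := fun hS ↦
  have ⟨_, hx, hx0⟩ := (((RCLike.tendsto_ofReal_atTop_cobounded ℂ).eventually hS).and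
    (eventually_ge_atTop 0)).exists
  hx (hray _ hx0)

/-- no open set `S ⊆ ℂ` containing the whole ray `[0,∞)` is a
multivariate zero-free region for the family `{C_{2n}[2K₁] : n ≥ 1}`. -/
theorem stmt13 (S : Set ℂ) (hS : IsOpen S) (hray : ∀ x : ℝ, 0 ≤ x → (x : ℂ) ∈ S) :
    ∃ (n : ℕ) (lam : Fin (2 * n) × Fin 2 → ℂ),
      1 ≤ n ∧ (∀ v, lam v ∈ S) ∧
      indepPoly (blowCyc2 (2 * n)) lam = 0 := by
  have hS0 : S ∈ 𝓝 0 := hS.mem_nhds (by exact_mod_cast hray 0 le_rfl)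
  obtain ⟨n, ⟨lam, hlam⟩, hn⟩ := ((stmt13_general hS0 (not_isBounded_of_ray_subset hray)).and
    (eventually_ge_atTop 1)).exists
  exact ⟨n, lam, hn, hlam⟩
end
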